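/- Let G be the subgroup of GL(V) generated by σ₅ and σ₂. The orbit {g(e + e₀) : g ∈ G} equals Δ_∞ := {±(e + eᵢ) : i ∈ ℤ/5} ∪ {±(eᵢ + e_{i+1}) : i ∈ ℤ/5} ∪ {±(e_{i−1} − e_{i+1}) : i ∈ ℤ/5}, a set of 15 antipodal pairs, and its ℤ-span equals E (the sublattice of E₀ of integer combinations with even coefficient sum). -/

import Mathlib

/-!
Index the basis of `V` by the projective line over `𝔽₅`. Then `Δ_∞` consists of the vectors
`±(b_a + c(a, b) b_b)`, `a ≠ b`, where `c` is the Paley conference matrix of order 6.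

*Counting.* Such a vector has support `{a, b}`, and exactly two of them, antipodal to each other,
have a given support, so there are `2 * (6 choose 2)`.

*Orbit.* `σ₅` and `σ₂` are signed permutations of the basis that preserve `c`, so the orbit stays in
`Δ_∞`. Conversely, `σ₂` moves the pairs `{e, e₄}` and `{e, e₂}` to `{e₀, e₁}` and `{e₀, e₂}`, and
the powers of `σ₅` then reach every pair. Both signs occur because `σ₂` negates `e₂ + e₃`.

*Span.* Each `b_a + c(a, b) b_b` has coefficient sum `0` or `2`. Conversely, `ℤ Δ_∞` contains
`2 e = (e + e₀) + (e + e₁) - (e₀ + e₁)`, hence also every `eᵢ - e = (e + eᵢ) - 2 e`; modulo `ℤ Δ_∞`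
an integral vector with coefficient sum `n` is therefore `n e`, which vanishes for even `n`.
-/

/-- Index type for the basis `e, e₀, …, e₄` of `V`: `none ↦ e`, `some i ↦ eᵢ`. -/
abbrev J5 := Option (ZMod 5)

/-- The 6-dimensional `ℚ`-vector space `V` with basis indexed by `J5`. -/
abbrev V := J5 → ℚ

/-- The basis vector of `V` with index `j`. -/
def bvec : J5 → V := fun j => Pi.single j 1

/-- The basis vector `e`. -/
def eV : V := Pi.single none 1

/-- The basis vectors `eᵢ`, `i ∈ ℤ/5`. -/
def ee (i : ZMod 5) : V := Pi.single (some i) 1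

/-- The symmetric bilinear form on `V` for which the basis `e, e₀, …, e₄` is orthonormal. -/
def sform (x y : V) : ℚ := ∑ j : J5, x j * y j

/-- Index rotation `some i ↦ some (i+1)`, `none ↦ none`. -/
def rotIdx : J5 ≃ J5 := Equiv.optionCongr (Equiv.addRight (1 : ZMod 5))

/-- `σ₅ : V ≃ V`, with `σ₅(e) = e` and `σ₅(eᵢ) = e_{i+1}`. -/
def s5 : V ≃ₗ[ℚ] V := LinearEquiv.funCongrLeft ℚ ℚ rotIdx.symm

/-- Index involution underlying `σ₂`. -/
def t2 : J5 → J5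
  | none => some 0
  | some i => if i = 0 then none else if i = 1 then some 4 else if i = 4 then some 1 else some i

/-- Sign function underlying `σ₂`. -/
def sg2 : J5 → ℚ := fun j => if j = some 2 ∨ j = some 3 then -1 else 1

/-- The function underlying `σ₂`. -/
def s2fun : V → V := fun x j => sg2 j * x (t2 j)

lemma t2_invol : ∀ j, t2 (t2 j) = j := by decide

lemma sg2_mul : ∀ j, sg2 j * sg2 (t2 j) = 1 := by
  intro j
  rcases j with _ | i
  · simp (config := { decide := true }) [sg2, t2]
  · fin_cases i <;> simp (config := { decide := true }) [sg2, t2]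

lemma s2fun_invol : Function.Involutive s2fun := by
  intro x
  funext j
  show sg2 j * (sg2 (t2 j) * x (t2 (t2 j))) = x j
  rw [t2_invol, ← mul_assoc, sg2_mul, one_mul]

/-- `σ₂ : V ≃ V`, with `σ₂(e) = e₀`, `σ₂(e₀) = e`, `σ₂(e₁) = e₄`, `σ₂(e₄) = e₁`,
`σ₂(e₂) = −e₂`, `σ₂(e₃) = −e₃`. -/
def s2 : V ≃ₗ[ℚ] V where
  toFun := s2fun
  invFun := s2fun
  left_inv := s2fun_invol
  right_inv := s2fun_invol
  map_add' x y := by funext j; simp [s2fun, mul_add]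
  map_smul' c x := by funext j; simp [s2fun]; ring

/-- `E₀ ⊂ V`: the `ℤ`-span of the basis `{e, e₀, …, e₄}`. -/
def E0 : Submodule ℤ V := Submodule.span ℤ (Set.range bvec)

/-- `E ⊂ E₀`: the integral combinations of the basis with even coefficient sum. -/
def Eset : Set V := {x | x ∈ E0 ∧ ∃ m : ℤ, (∑ j : J5, x j) = 2 * m}

/-- `Δ_∞ = {±(e + eᵢ)} ∪ {±(eᵢ + e_{i+1})} ∪ {±(e_{i−1} − e_{i+1})}`, `i ∈ ℤ/5`. -/
def DeltaInf : Set V :=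
  {x | ∃ i : ZMod 5,
    x = eV + ee i ∨ x = -(eV + ee i) ∨
    x = ee i + ee (i + 1) ∨ x = -(ee i + ee (i + 1)) ∨
    x = ee (i - 1) - ee (i + 1) ∨ x = -(ee (i - 1) - ee (i + 1))}

/-- The icosahedral group `G = ⟨σ₅, σ₂⟩ ≅ A₅` inside `GL(V)`. -/
def Gico : Subgroup (V ≃ₗ[ℚ] V) := Subgroup.closure {s5, s2}

open MulAction
open scoped Pointwise

lemma orbit_closure_subset_of_finite {G α : Type*} [Group G] [MulAction G α] {S : Set G}
    {D : Set α} (hD : D.Finite) (hS : ∀ g ∈ S, ∀ x ∈ D, g • x ∈ D) {x : α} (hx : x ∈ D) :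
    orbit (Subgroup.closure S) x ⊆ D := by
  have hstab : Subgroup.closure S ≤ stabilizer G D :=
    (Subgroup.closure_le _).2 fun g hg => (mem_stabilizer_set' hD).2 (hS g hg)
  rintro _ ⟨g, rfl⟩
  exact (mem_stabilizer_set' hD).1 (hstab g.2) hx

lemma neg_mem_orbit_of_neg_mem_orbit {G A : Type*} [Group G] [AddGroup A]
    [DistribMulAction G A] {x y z : A} (hy : y ∈ orbit G x) (hy' : -y ∈ orbit G x)
    (hz : z ∈ orbit G x) : -z ∈ orbit G x := by
  rw [← orbit_eq_iff.2 hy] at hz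
  obtain ⟨g, rfl⟩ := hz
  simpa only [smul_neg] using mem_orbit_of_mem_orbit g hy'

lemma setOf_exists_mem_apply_eq_orbit {R M : Type*} [Semiring R] [AddCommMonoid M] [Module R M]
    (H : Subgroup (M ≃ₗ[R] M)) (v : M) : {x : M | ∃ g ∈ H, g v = x} = orbit H v := by
  ext x
  simp [mem_orbit_iff, Subgroup.smul_def]

lemma sum_zsmul_mem_of_even {ι M : Type*} [AddCommGroup M] {L : Submodule ℤ M}
    {s : Finset ι} {b : ι → M} {u : M} (hb : ∀ j ∈ s, b j - u ∈ L) (hu : (2 : ℤ) • u ∈ L)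
    {n : ι → ℤ} (hn : Even (∑ j ∈ s, n j)) : ∑ j ∈ s, n j • b j ∈ L := by
  obtain ⟨m, hm⟩ := hn
  have hsplit : ∑ j ∈ s, n j • b j = ∑ j ∈ s, n j • (b j - u) + m • (2 : ℤ) • u := by
    simp only [smul_sub, Finset.sum_sub_distrib, ← Finset.sum_smul, hm]
    module
  rw [hsplit]
  exact add_mem (sum_mem fun j hj => L.smul_mem _ (hb j hj)) (L.smul_mem _ hu)

@[elab_as_elim]
lemma zmod_induction {n : ℕ} [NeZero n] {P : ZMod n → Prop} (zero : P 0)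
    (succ : ∀ i, P i → P (i + 1)) (i : ZMod n) : P i := by
  have hnat : ∀ k : ℕ, P k := fun k => by
    induction k with
    | zero => simpa only [Nat.cast_zero] using zero
    | succ k ih => simpa only [Nat.cast_succ] using succ _ ih
  simpa only [ZMod.natCast_zmod_val] using hnat i.val

/-- The off-diagonal entries of the Paley conference matrix of order 6, indexed by
`ℙ¹(𝔽₅) = J5`: the Legendre symbol of `i - j`, bordered by `1`. The diagonal entries
are irrelevant and set to `1`, so that all values are units. -/
def paleySign : J5 → J5 → ℤˣ
  | some i, some j => if IsSquare (i - j) then 1 else -1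
  | _, _ => 1

/-- The vector `b_a + c(a, b) b_b` attached to two axes `a`, `b` of the icosahedron, where `c` is
the conference matrix `paleySign`. For `a ≠ b` these are, up to sign, the vectors of `Δ_∞`. -/
def edge (a b : J5) : V := bvec a + paleySign a b • bvec b

lemma paleySign_comm : ∀ a b, paleySign a b = paleySign b a := by decide

lemma edge_swap (a b : J5) : edge b a = paleySign a b • edge a b := by
  rw [edge, edge, paleySign_comm b a, smul_add, smul_smul, Int.units_mul_self, one_smul, add_comm]

lemma edge_none_some (i : ZMod 5) : edge none (some i) = eV + ee i := by
  simp [edge, paleySign, bvec, eV, ee]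

lemma edge_some_add_one (i : ZMod 5) : edge (some i) (some (i + 1)) = ee i + ee (i + 1) := by
  have hsign : ∀ i : ZMod 5, paleySign (some i) (some (i + 1)) = 1 := by decide
  simp [edge, hsign, bvec, ee]

lemma edge_some_sub_one_add_one (i : ZMod 5) :
    edge (some (i - 1)) (some (i + 1)) = ee (i - 1) - ee (i + 1) := by
  have hsign : ∀ i : ZMod 5, paleySign (some (i - 1)) (some (i + 1)) = -1 := by decide
  rw [edge, hsign, Units.neg_smul, one_smul, ← sub_eq_add_neg, bvec, bvec, ee, ee]

lemma neg_mem_DeltaInf {x : V} (hx : x ∈ DeltaInf) : -x ∈ DeltaInf := by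
  obtain ⟨i, h⟩ := hx
  refine ⟨i, ?_⟩
  rcases h with rfl | rfl | rfl | rfl | rfl | rfl <;> simp

lemma units_smul_mem_DeltaInf (ε : ℤˣ) {x : V} (hx : x ∈ DeltaInf) : ε • x ∈ DeltaInf := by
  rcases Int.units_eq_one_or ε with rfl | rfl
  · rwa [one_smul]
  · rw [Units.neg_smul, one_smul]
    exact neg_mem_DeltaInf hx

lemma edge_mem_DeltaInf {a b : J5} (hab : a ≠ b) : edge a b ∈ DeltaInf := by
  have hspoke (i) : edge none (some i) ∈ DeltaInf := ⟨i, .inl (edge_none_some i)⟩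
  have hone (i) : edge (some i) (some (i + 1)) ∈ DeltaInf :=
    ⟨i, .inr <| .inr <| .inl (edge_some_add_one i)⟩
  have htwo (i) : edge (some (i - 1)) (some (i + 1)) ∈ DeltaInf :=
    ⟨i, .inr <| .inr <| .inr <| .inr <| .inl (edge_some_sub_one_add_one i)⟩
  have hswap {a b} (h : edge a b ∈ DeltaInf) : edge b a ∈ DeltaInf := by
    rw [edge_swap]
    exact units_smul_mem_DeltaInf _ h
  have hdiff : ∀ i j : ZMod 5, i ≠ j →
      j = i + 1 ∨ i = j + 1 ∨ (∃ k, i = k - 1 ∧ j = k + 1) ∨ ∃ k, j = k - 1 ∧ i = k + 1 := by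
    decide
  match a, b, hab with
  | none, some i, _ => exact hspoke i
  | some i, none, _ => exact hswap (hspoke i)
  | some i, some j, hij =>
    rcases hdiff i j fun h => hij (congrArg some h) with
      rfl | rfl | ⟨k, rfl, rfl⟩ | ⟨k, rfl, rfl⟩
    exacts [hone i, hswap (hone j), htwo k, hswap (htwo k)]

lemma mem_DeltaInf_iff {x : V} :
    x ∈ DeltaInf ↔ ∃ a b, a ≠ b ∧ (x = edge a b ∨ x = -edge a b) := by
  constructor
  · have hone : ∀ i : ZMod 5, some i ≠ some (i + 1) := by decide
    have htwo : ∀ i : ZMod 5, some (i - 1) ≠ some (i + 1) := by decide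
    rintro ⟨i, h⟩
    rw [← edge_none_some, ← edge_some_add_one, ← edge_some_sub_one_add_one] at h
    rcases h with h | h | h | h | h | h
    exacts [⟨_, _, Option.some_ne_none i |>.symm, .inl h⟩,
      ⟨_, _, Option.some_ne_none i |>.symm, .inr h⟩, ⟨_, _, hone i, .inl h⟩,
      ⟨_, _, hone i, .inr h⟩, ⟨_, _, htwo i, .inl h⟩, ⟨_, _, htwo i, .inr h⟩]
  · rintro ⟨a, b, hab, rfl | rfl⟩
    exacts [edge_mem_DeltaInf hab, neg_mem_DeltaInf (edge_mem_DeltaInf hab)]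

lemma finite_DeltaInf : DeltaInf.Finite := by
  refine (Set.finite_range fun p : (J5 × J5) × ℤˣ => p.2 • edge p.1.1 p.1.2).subset fun x hx => ?_
  obtain ⟨a, b, -, rfl | rfl⟩ := mem_DeltaInf_iff.1 hx
  exacts [⟨((a, b), 1), by simp⟩, ⟨((a, b), -1), by simp⟩]

/-- The set of coordinates at which a vector of `V` does not vanish, as a `Finset`. -/
def coordSupport (x : V) : Finset J5 := {j | x j ≠ 0}

lemma coordSupport_neg (x : V) : coordSupport (-x) = coordSupport x := by
  simp [coordSupport]

lemma coordSupport_edge {a b : J5} (hab : a ≠ b) : coordSupport (edge a b) = {a, b} := by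
  ext j
  rcases eq_or_ne j a with rfl | hja
  · simp [coordSupport, edge, bvec, hab, Units.smul_def]
  · rcases eq_or_ne j b with rfl | hjb
    · simp [coordSupport, edge, bvec, hja, Units.smul_def]
    · simp [coordSupport, edge, bvec, hja, hjb, Units.smul_def]

lemma edge_ne_neg {a b : J5} (hab : a ≠ b) : edge a b ≠ -edge a b := by
  rw [Ne, self_eq_neg]
  intro hzero
  have ha : a ∈ coordSupport (edge a b) := by simp [coordSupport_edge hab]
  simp [hzero, coordSupport] at ha

lemma mem_DeltaInf_and_coordSupport_eq_iff {a b : J5} (hab : a ≠ b) {x : V} :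
    x ∈ DeltaInf ∧ coordSupport x = {a, b} ↔ x = edge a b ∨ x = -edge a b := by
  constructor
  · rintro ⟨hx, hsupp⟩
    obtain ⟨c, d, hcd, hx⟩ := mem_DeltaInf_iff.1 hx
    have hpair : ({c, d} : Finset J5) = {a, b} := by
      rcases hx with rfl | rfl <;> simpa [coordSupport_neg, coordSupport_edge hcd] using hsupp
    have hcases : c = a ∧ d = b ∨ c = b ∧ d = a := by
      simpa only [← Finset.coe_inj, Finset.coe_pair, Set.pair_eq_pair_iff] using hpair
    rcases hcases with ⟨rfl, rfl⟩ | ⟨rfl, rfl⟩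
    · exact hx
    · rw [edge_swap d c] at hx
      rcases Int.units_eq_one_or (paleySign d c) with h | h <;> simpa [h, or_comm] using hx
  · rintro (rfl | rfl)
    · exact ⟨edge_mem_DeltaInf hab, coordSupport_edge hab⟩
    · exact ⟨neg_mem_DeltaInf (edge_mem_DeltaInf hab),
        (coordSupport_neg _).trans (coordSupport_edge hab)⟩

lemma ncard_DeltaInf : DeltaInf.ncard = 30 := by
  have hmaps : ∀ x ∈ finite_DeltaInf.toFinset, coordSupport x ∈ Finset.univ.powersetCard 2 := by
    intro x hx
    obtain ⟨a, b, hab, rfl | rfl⟩ := mem_DeltaInf_iff.1 (finite_DeltaInf.mem_toFinset.1 hx)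
    all_goals simp [coordSupport_neg, coordSupport_edge hab, Finset.card_pair hab]
  have hfiber : ∀ s ∈ Finset.univ.powersetCard 2,
      (finite_DeltaInf.toFinset.filter (coordSupport · = s)).card = 2 := by
    intro s hs
    obtain ⟨a, b, hab, rfl⟩ := Finset.card_eq_two.1 (Finset.mem_powersetCard_univ.1 hs)
    rw [← Finset.card_pair (edge_ne_neg hab)]
    congr 1
    ext x
    simp [mem_DeltaInf_and_coordSupport_eq_iff hab]
  calc DeltaInf.ncard = finite_DeltaInf.toFinset.card := Set.ncard_eq_toFinset_card _ _
    _ = ((Finset.univ : Finset J5).powersetCard 2).card * 2 := by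
      rw [Finset.card_eq_sum_card_fiberwise hmaps, Finset.sum_const_nat hfiber]
    _ = 30 := by
      rw [Finset.card_powersetCard]
      decide

lemma s5_bvec (a : J5) : s5 (bvec a) = bvec (rotIdx a) := by
  ext j
  simp [s5, bvec, LinearEquiv.funCongrLeft_apply, LinearMap.funLeft_apply, Pi.single_apply,
    Equiv.symm_apply_eq]

/-- The sign `ε` with `σ₂ b_a = ε b_{t2 a}`; a unit-valued version of `sg2`. -/
def s2Sign (a : J5) : ℤˣ := if a = some 2 ∨ a = some 3 then -1 else 1

lemma s2_bvec (a : J5) : s2 (bvec a) = s2Sign a • bvec (t2 a) := by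
  have hsign : ∀ a, sg2 (t2 a) = ((s2Sign a : ℤ) : ℚ) := by decide
  ext j
  change sg2 j * bvec a (t2 j) = _
  rcases eq_or_ne j (t2 a) with rfl | hj
  · simp [t2_invol, hsign, bvec, Units.smul_def]
  · have hj' : t2 j ≠ a := fun h => hj (by rw [← h, t2_invol])
    simp [bvec, hj, hj']

/-- The linear map `g` permutes the basis vectors by `π` up to the signs `η`, and this signed
permutation is an automorphism of the conference matrix `paleySign`. -/
structure IsConferenceAut (g : V ≃ₗ[ℚ] V) (π : J5 → J5) (η : J5 → ℤˣ) : Prop where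
  injective : Function.Injective π
  map_bvec : ∀ a, g (bvec a) = η a • bvec (π a)
  map_sign : ∀ a b, paleySign (π a) (π b) = η a * η b * paleySign a b

namespace IsConferenceAut

variable {g : V ≃ₗ[ℚ] V} {π : J5 → J5} {η : J5 → ℤˣ}

lemma map_edge (h : IsConferenceAut g π η) (a b : J5) :
    g (edge a b) = η a • edge (π a) (π b) := by
  have hsign : η a * paleySign (π a) (π b) = paleySign a b * η b := by
    rw [h.map_sign, mul_assoc, ← mul_assoc, Int.units_mul_self, one_mul, mul_comm]
  calc g (edge a b) = η a • bvec (π a) + paleySign a b • η b • bvec (π b) := by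
        rw [edge, map_add, h.map_bvec, Units.smul_def (paleySign a b), map_zsmul, h.map_bvec,
          ← Units.smul_def]
    _ = η a • edge (π a) (π b) := by rw [edge, smul_add, smul_smul, smul_smul, hsign]

lemma map_mem_DeltaInf (h : IsConferenceAut g π η) {x : V} (hx : x ∈ DeltaInf) :
    g x ∈ DeltaInf := by
  obtain ⟨a, b, hab, hx⟩ := mem_DeltaInf_iff.1 hx
  have hedge : g (edge a b) ∈ DeltaInf := by
    rw [h.map_edge]
    exact units_smul_mem_DeltaInf _ (edge_mem_DeltaInf (h.injective.ne hab))
  rcases hx with rfl | rfl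
  · exact hedge
  · rw [map_neg]
    exact neg_mem_DeltaInf hedge

end IsConferenceAut

lemma isConferenceAut_s5 : IsConferenceAut s5 rotIdx 1 where
  injective := rotIdx.injective
  map_bvec a := by rw [s5_bvec, Pi.one_apply, one_smul]
  map_sign := by decide

lemma isConferenceAut_s2 : IsConferenceAut s2 t2 s2Sign where
  injective := Function.Involutive.injective t2_invol
  map_bvec := s2_bvec
  map_sign := by decide

lemma s5_edge_some (i j : ZMod 5) :
    s5 (edge (some i) (some j)) = edge (some (i + 1)) (some (j + 1)) := by
  rw [isConferenceAut_s5.map_edge, Pi.one_apply, one_smul]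
  rfl

lemma s5_edge_none (i : ZMod 5) : s5 (edge none (some i)) = edge none (some (i + 1)) := by
  rw [isConferenceAut_s5.map_edge, Pi.one_apply, one_smul]
  rfl

lemma s2_edge_none (i : ZMod 5) : s2 (edge none (some i)) = edge (some 0) (t2 (some i)) := by
  rw [isConferenceAut_s2.map_edge, show s2Sign none = 1 by decide, one_smul]
  rfl

lemma s2_edge_two_three : s2 (edge (some 2) (some 3)) = -edge (some 2) (some 3) := by
  rw [isConferenceAut_s2.map_edge, show s2Sign (some 2) = -1 by decide, Units.neg_smul, one_smul]
  rfl

lemma orbit_subset_DeltaInf : orbit Gico (eV + ee 0) ⊆ DeltaInf := by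
  refine orbit_closure_subset_of_finite finite_DeltaInf ?_ ⟨0, .inl rfl⟩
  rintro g (rfl | rfl) x hx
  exacts [isConferenceAut_s5.map_mem_DeltaInf hx, isConferenceAut_s2.map_mem_DeltaInf hx]

lemma s5_mem_orbit {x v : V} (hx : x ∈ orbit Gico v) : s5 x ∈ orbit Gico v :=
  mem_orbit_of_mem_orbit (⟨s5, Subgroup.subset_closure (.inl rfl)⟩ : Gico) hx

lemma s2_mem_orbit {x v : V} (hx : x ∈ orbit Gico v) : s2 x ∈ orbit Gico v :=
  mem_orbit_of_mem_orbit (⟨s2, Subgroup.subset_closure (.inr rfl)⟩ : Gico) hx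

lemma edge_none_mem_orbit (i : ZMod 5) : edge none (some i) ∈ orbit Gico (eV + ee 0) := by
  induction i using zmod_induction with
  | zero => exact edge_none_some 0 ▸ mem_orbit_self _
  | succ i ih => exact s5_edge_none i ▸ s5_mem_orbit ih

lemma edge_add_mem_orbit {v : V} {d : ZMod 5} (hd : edge (some 0) (some d) ∈ orbit Gico v)
    (i : ZMod 5) : edge (some i) (some (i + d)) ∈ orbit Gico v := by
  induction i using zmod_induction with
  | zero => rwa [zero_add]
  | succ i ih =>
    rw [add_right_comm, ← s5_edge_some]
    exact s5_mem_orbit ih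

lemma edge_add_one_mem_orbit (i : ZMod 5) :
    edge (some i) (some (i + 1)) ∈ orbit Gico (eV + ee 0) :=
  edge_add_mem_orbit (s2_edge_none 4 ▸ s2_mem_orbit (edge_none_mem_orbit 4)) i

lemma edge_add_two_mem_orbit (i : ZMod 5) :
    edge (some i) (some (i + 2)) ∈ orbit Gico (eV + ee 0) :=
  edge_add_mem_orbit (s2_edge_none 2 ▸ s2_mem_orbit (edge_none_mem_orbit 2)) i

lemma neg_mem_orbit_Gico {x : V} (hx : x ∈ orbit Gico (eV + ee 0)) :
    -x ∈ orbit Gico (eV + ee 0) := by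
  have h : edge (some 2) (some 3) ∈ orbit Gico (eV + ee 0) := edge_add_one_mem_orbit 2
  exact neg_mem_orbit_of_neg_mem_orbit h (s2_edge_two_three ▸ s2_mem_orbit h) hx

lemma orbit_eq_DeltaInf : orbit Gico (eV + ee 0) = DeltaInf := by
  refine orbit_subset_DeltaInf.antisymm ?_
  rintro x ⟨i, h⟩
  have hspoke := edge_none_mem_orbit i
  have hone := edge_add_one_mem_orbit i
  have htwo := edge_add_two_mem_orbit (i - 1)
  rw [show i - 1 + 2 = i + 1 by ring, edge_some_sub_one_add_one] at htwo
  rw [edge_none_some] at hspoke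
  rw [edge_some_add_one] at hone
  rcases h with rfl | rfl | rfl | rfl | rfl | rfl
  exacts [hspoke, neg_mem_orbit_Gico hspoke, hone, neg_mem_orbit_Gico hone, htwo,
    neg_mem_orbit_Gico htwo]

/-- The lattice `E` as a `ℤ`-submodule of `V`. -/
def evenLattice : Submodule ℤ V :=
  E0 ⊓ (Submodule.span ℤ {(2 : ℚ)}).comap (∑ j : J5, LinearMap.proj j)

lemma coe_evenLattice : (evenLattice : Set V) = Eset := by
  ext x
  simp [evenLattice, Eset, Submodule.mem_span_singleton, mul_comm, eq_comm]

lemma edge_mem_evenLattice (a b : J5) : edge a b ∈ evenLattice := by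
  have hbvec (c) : bvec c ∈ E0 := Submodule.subset_span ⟨c, rfl⟩
  have hsum (c) : ∑ j, bvec c j = 1 := by simp [bvec]
  rw [← SetLike.mem_coe, coe_evenLattice]
  rcases Int.units_eq_one_or (paleySign a b) with h | h
  · refine ⟨?_, 1, ?_⟩
    · simpa [edge, h] using add_mem (hbvec a) (hbvec b)
    · simp [edge, h, Finset.sum_add_distrib, hsum, one_add_one_eq_two]
  · refine ⟨?_, 0, ?_⟩
    · simpa [edge, h, sub_eq_add_neg] using sub_mem (hbvec a) (hbvec b)
    · simp [edge, h, Finset.sum_add_distrib, hsum]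

lemma two_zsmul_eV_mem_span : (2 : ℤ) • eV ∈ Submodule.span ℤ DeltaInf := by
  have hsum : (2 : ℤ) • eV = (eV + ee 0) + (eV + ee 1) - (ee 0 + ee (0 + 1)) := by
    rw [zero_add]
    module
  rw [hsum]
  refine sub_mem (add_mem ?_ ?_) ?_ <;> apply Submodule.subset_span
  exacts [⟨0, by simp⟩, ⟨1, by simp⟩, ⟨0, by simp⟩]

lemma bvec_sub_eV_mem_span (a : J5) : bvec a - eV ∈ Submodule.span ℤ DeltaInf := by
  rcases a with _ | i
  · exact (sub_self eV).symm ▸ zero_mem _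
  · have hsub : bvec (some i) - eV = (eV + ee i) - (2 : ℤ) • eV := by
      change ee i - eV = _
      module
    rw [hsub]
    exact sub_mem (Submodule.subset_span ⟨i, .inl rfl⟩) two_zsmul_eV_mem_span

lemma span_DeltaInf : (Submodule.span ℤ DeltaInf : Set V) = Eset := by
  apply Set.Subset.antisymm
  · rw [← coe_evenLattice]
    refine Submodule.span_le.2 fun x hx => ?_
    obtain ⟨a, b, -, rfl | rfl⟩ := mem_DeltaInf_iff.1 hx
    exacts [edge_mem_evenLattice a b, neg_mem (edge_mem_evenLattice a b)]
  · rintro x ⟨hx, m, hm⟩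
    obtain ⟨n, rfl⟩ := (Submodule.mem_span_range_iff_exists_fun ℤ).1 hx
    have heven : Even (∑ j, n j) := by
      rw [even_iff_exists_two_mul]
      refine ⟨m, ?_⟩
      have hsum : ∑ k, (∑ j, n j • bvec j) k = ((∑ j, n j : ℤ) : ℚ) := by
        simp [bvec, Finset.sum_apply, Pi.single_apply]
      exact_mod_cast hsum.symm.trans hm
    exact sum_zsmul_mem_of_even (fun a _ => bvec_sub_eV_mem_span a) two_zsmul_eV_mem_span heven

/-- The `G`-orbit of `e + e₀` equals `Δ_∞`, a set of 15 antipodal pairs (30 elements,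
closed under negation), and its `ℤ`-span equals `E`, the sublattice of `E₀` of integer
combinations with even coefficient sum. -/
theorem orbit_of_e_plus_e0 :
    {x : V | ∃ g ∈ Gico, g (eV + ee 0) = x} = DeltaInf ∧
    Set.ncard DeltaInf = 30 ∧
    (∀ x ∈ DeltaInf, -x ∈ DeltaInf) ∧
    (Submodule.span ℤ {x : V | ∃ g ∈ Gico, g (eV + ee 0) = x} : Set V) = Eset := by
  rw [setOf_exists_mem_apply_eq_orbit, orbit_eq_DeltaInf]
  exact ⟨rfl, ncard_DeltaInf, fun _ => neg_mem_DeltaInf, span_DeltaInf⟩
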